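/- arXiv:2412.15160 — 4 statements merged into one kernel-verified Lean document; each statement's English description precedes it below -/
import Mathlib

section
/- Let C = ev_{α,v}(P_{t,h,η}^{n,k}) be a TGRS code with ℓ ≤ k ≤ n ≤ q, pairwise distinct hooks h_j ∈ {0,…,k−1}, pairwise distinct twists t_j ∈ {1,…,n−k}, and all coefficients η_j ≠ 0, and let t_max be the largest entry of t. Let I ⊆ {1,…,n} with |I| ≤ k − ℓ and suppose dim(C_I) = k − |I|. Then dim(C_I ⋆ C_I) ≤ min{ (ℓ+2)(k−|I|) − 1 − ℓ(ℓ−1)/2, 2k + t_max − 1 − 2|I| + ℓ(ℓ+1)/2, 2(k + t_max − |I|) − 1 }. -/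
open Polynomial

/-- The evaluation map `f ↦ (v_i f(α_i))_i`. -/
noncomputable def ev {F : Type*} [Field F] {ι : Type*} (α v : ι → F) :
    Polynomial F →ₗ[F] (ι → F) where
  toFun f := fun i => v i * f.eval (α i)
  map_add' f g := by ext i; simp [mul_add]
  map_smul' a f := by ext i; simp [smul_eq_mul]; ring

/-- The Schur (componentwise) product of two subspaces of `F^ι`. -/
def schurProduct (F : Type*) [Field F] {ι : Type*} (A B : Submodule F (ι → F)) :
    Submodule F (ι → F) :=
  Submodule.span F {x | ∃ a ∈ A, ∃ b ∈ B, x = a * b}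

/-- The shortening of a code `C ⊆ F^ι` at `I`. -/
noncomputable def shorten {F : Type*} [Field F] {ι : Type*}
    (C : Submodule F (ι → F)) (I : Set ι) :
    Submodule F ({i : ι // i ∉ I} → F) :=
  ((C ⊓ LinearMap.ker (LinearMap.funLeft F F (fun i : I => (i : ι)))).map
    (LinearMap.funLeft F F (fun j : {i : ι // i ∉ I} => (j : ι))))

/-- The linear map `(f_0,…,f_{k−1}) ↦ Σ_{i<k} f_i x^i + Σ_j η_j f_{h_j} x^{k−1+t_j}`,
whose range is the twisted polynomial space `P_{t,h,η}^{n,k}`. -/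
noncomputable def twistedMap {F : Type*} [Field F] (k : ℕ) {ℓ : ℕ}
    (t : Fin ℓ → ℕ) (h : Fin ℓ → Fin k) (η : Fin ℓ → F) :
    (Fin k → F) →ₗ[F] Polynomial F :=
  (∑ i : Fin k, (Polynomial.monomial (i : ℕ)).comp (LinearMap.proj i)) +
  ∑ j : Fin ℓ, (Polynomial.monomial (k - 1 + t j)).comp (η j • LinearMap.proj (h j))

/-!
Let `g = ∏_{i ∈ I} (X - α_i)`. A polynomial whose codeword vanishes on `I` is divisible by `g`, and
division by `g` is linear and lowers degrees by `|I|`. Hence `C_I` lies in the generalized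
Reed–Solomon code of dimension parameter `k + t_max - |I|` with column multipliers `v_j g(α_j)`, and
also in the sum of the one of parameter `k - |I|` and a space of dimension at most `ℓ` spanned by
the quotients of the twist monomials. So `C_I = D₀ ⊕ G` with `D₀` inside the smaller code and
`dim G ≤ ℓ`. In `C_I ⋆ C_I = D₀ ⋆ C_I + G ⋆ G` the first term is controlled by adding degrees,
directly or through `D₀ ⋆ C_I = D₀ ⋆ D₀ + D₀ ⋆ G`, and the second by counting unordered pairs of
basis vectors of `G`.
-/

open Module Lagrange

section SubspaceProducts

variable {K V R : Type*} [Field K] [AddCommGroup V] [Module K V] [CommRing R] [Algebra K R]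

instance finiteDimensional_mul (A B : Submodule K R) [FiniteDimensional K A]
    [FiniteDimensional K B] : FiniteDimensional K (A * B : Submodule K R) :=
  Finite.iff_fg.mpr ((Finite.iff_fg.mp ‹_›).mul (Finite.iff_fg.mp ‹_›))

theorem finrank_mul_le_finrank_mul_finrank (A B : Submodule K R)
    [FiniteDimensional K A] [FiniteDimensional K B] :
    finrank K (A * B : Submodule K R) ≤ finrank K A * finrank K B := by
  rw [← Submodule.mulMap_range, ← finrank_tensorProduct]
  exact LinearMap.finrank_range_le _

theorem finrank_mul_self_le_choose (A : Submodule K R) [FiniteDimensional K A] :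
    finrank K (A * A : Submodule K R) ≤ (finrank K A + 1).choose 2 := by
  let b : Fin (finrank K A) → R := fun i => finBasis K A i
  have span_b : Submodule.span K (Set.range b) = A := by
    have := congrArg (Submodule.map A.subtype) (finBasis K A).span_eq
    rwa [Submodule.map_span, ← Set.range_comp, Submodule.map_top, Submodule.range_subtype] at this
  let products : Sym2 (Fin (finrank K A)) → R :=
    Sym2.lift ⟨fun i j => b i * b j, fun _ _ => mul_comm _ _⟩
  have mul_le_span : A * A ≤ Submodule.span K (Set.range products) := by
    conv_lhs => rw [← span_b, Submodule.span_mul_span]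
    refine Submodule.span_mono ?_
    rintro _ ⟨_, ⟨i, rfl⟩, _, ⟨j, rfl⟩, rfl⟩
    exact ⟨s(i, j), rfl⟩
  have : FiniteDimensional K (Submodule.span K (Set.range products)) :=
    FiniteDimensional.span_of_finite K (Set.finite_range products)
  calc finrank K (A * A : Submodule K R)
      ≤ finrank K (Submodule.span K (Set.range products)) := Submodule.finrank_mono mul_le_span
    _ ≤ Fintype.card (Sym2 (Fin (finrank K A))) := finrank_range_le_card products
    _ = (finrank K A + 1).choose 2 := by rw [Sym2.card, Fintype.card_fin]

theorem finrank_sup_mul_self_le (A G : Submodule K R)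
    [FiniteDimensional K A] [FiniteDimensional K G] :
    finrank K ((A ⊔ G) * (A ⊔ G) : Submodule K R) ≤
      finrank K (A * (A ⊔ G) : Submodule K R) + (finrank K G + 1).choose 2 := by
  have mul_self_eq : (A ⊔ G) * (A ⊔ G) = A * (A ⊔ G) ⊔ G * G := by
    rw [Submodule.sup_mul, Submodule.mul_sup G, mul_comm G A, ← sup_assoc,
      sup_eq_left.mpr (mul_le_mul' le_rfl le_sup_right)]
  rw [mul_self_eq]
  exact (Submodule.finrank_add_le_finrank_add_finrank _ _).trans
    (Nat.add_le_add_left (finrank_mul_self_le_choose G) _)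

theorem finrank_mul_sup_le (A G : Submodule K R)
    [FiniteDimensional K A] [FiniteDimensional K G] :
    finrank K (A * (A ⊔ G) : Submodule K R) ≤
      finrank K (A * A : Submodule K R) + finrank K A * finrank K G := by
  rw [Submodule.mul_sup]
  exact (Submodule.finrank_add_le_finrank_add_finrank _ _).trans
    (Nat.add_le_add_left (finrank_mul_le_finrank_mul_finrank A G) _)

theorem finrank_le_finrank_inf_add_finrank {D A T : Submodule K V} [FiniteDimensional K D]
    [FiniteDimensional K A] [FiniteDimensional K T] (hD : D ≤ A ⊔ T) :
    finrank K D ≤ finrank K (D ⊓ A : Submodule K V) + finrank K T := by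
  have modular := Submodule.finrank_sup_add_finrank_inf_eq D A
  have sup_le_sup := Submodule.finrank_mono (sup_le hD le_sup_left)
  have finrank_sup_le := Submodule.finrank_add_le_finrank_add_finrank A T
  omega

theorem exists_sup_eq_of_le_sup {D A T : Submodule K V} [FiniteDimensional K D]
    [FiniteDimensional K A] [FiniteDimensional K T] (hD : D ≤ A ⊔ T) :
    ∃ D₀ ≤ A, ∃ G : Submodule K V, D₀ ⊔ G = D ∧
      finrank K D₀ + finrank K G = finrank K D ∧ finrank K G ≤ finrank K T := by
  obtain ⟨G, disjoint, sup_eq⟩ :=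
    IsModularLattice.exists_disjoint_and_sup_eq (inf_le_left : D ⊓ A ≤ D)
  have : FiniteDimensional K G := Submodule.finiteDimensional_of_le (sup_eq ▸ le_sup_right)
  have finrank_add := Submodule.finrank_sup_add_finrank_inf_eq (D ⊓ A) G
  rw [sup_eq, disjoint.eq_bot, finrank_bot] at finrank_add
  have finrank_le := finrank_le_finrank_inf_add_finrank hD
  exact ⟨D ⊓ A, inf_le_right, G, sup_eq, by omega, by omega⟩

end SubspaceProducts

section DivByMonic

variable {R : Type*} [CommRing R]

/-- Division by `g` as a linear map on polynomials, the counterpart of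
`Polynomial.modByMonicHom`. Like `/ₘ`, it is zero when `g` is not monic. -/
noncomputable def divByMonicHom (g : R[X]) : R[X] →ₗ[R] R[X] where
  toFun p := p /ₘ g
  map_add' p q := by
    by_cases hg : g.Monic
    · refine hg.isRegular.left ?_
      linear_combination modByMonic_add_div (p + q) g - modByMonic_add_div p g -
        modByMonic_add_div q g - add_modByMonic (q := g) p q
    · simp only [divByMonic_eq_of_not_monic _ hg, add_zero]
  map_smul' c p := by
    by_cases hg : g.Monic
    · refine hg.isRegular.left ?_
      have smul_mod := smul_modByMonic (q := g) c p
      simp only [RingHom.id_apply, smul_eq_C_mul] at smul_mod ⊢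
      linear_combination modByMonic_add_div (C c * p) g - C c * modByMonic_add_div p g - smul_mod
    · simp only [divByMonic_eq_of_not_monic _ hg, smul_zero]

theorem map_divByMonicHom_degreeLT_le {g : R[X]} (hg : g.Monic) (N : ℕ) :
    (degreeLT R N).map (divByMonicHom g) ≤ degreeLT R (N - g.natDegree) := by
  rintro _ ⟨p, hp, rfl⟩
  nontriviality R
  rw [SetLike.mem_coe, mem_degreeLT] at hp
  rw [mem_degreeLT]
  change (p /ₘ g).degree < _
  by_cases hpg : p.degree < g.degree
  · rw [(divByMonic_eq_zero_iff hg).mpr hpg, degree_zero]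
    exact WithBot.bot_lt_coe _
  · have quotient_ne_zero : p /ₘ g ≠ 0 := mt (divByMonic_eq_zero_iff hg).mp hpg
    rw [← degree_add_divByMonic hg (not_lt.mp hpg), degree_eq_natDegree hg.ne_zero,
      degree_eq_natDegree quotient_ne_zero] at hp
    rw [degree_eq_natDegree quotient_ne_zero]
    norm_cast at hp ⊢
    omega

end DivByMonic

theorem mul_add_choose_add_choose_le {d g ℓ s : ℕ} (hd : d + g ≤ s) (hg : g ≤ ℓ) (hℓ : ℓ ≤ s) :
    d * g + (g + 1).choose 2 + ℓ.choose 2 ≤ ℓ * s := by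
  obtain ⟨a, rfl⟩ := Nat.exists_eq_add_of_le hg
  obtain ⟨b, rfl⟩ := Nat.exists_eq_add_of_le hℓ
  have hdg : d * g ≤ (a + b) * g := Nat.mul_le_mul_right g (by omega)
  suffices (a + b) * g + (g + 1).choose 2 + (g + a).choose 2 ≤ (g + a) * (g + a + b) by omega
  qify
  simp only [Nat.cast_choose_two]
  push_cast
  nlinarith [(by positivity : (0 : ℚ) ≤ a ^ 2 + 2 * a * b + a)]

section GRS

variable {F ι : Type*} [Field F]

/-- The generalized Reed–Solomon code with evaluation points `α`, column multipliers `v` and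
dimension parameter `k`. The points need not be distinct, nor the multipliers nonzero. -/
noncomputable def grsCode (α v : ι → F) (k : ℕ) : Submodule F (ι → F) :=
  (degreeLT F k).map (ev α v)

theorem finrank_grsCode_le (α v : ι → F) (k : ℕ) : finrank F (grsCode α v k) ≤ k := by
  have := (degreeLTEquiv F k).symm.finiteDimensional
  calc finrank F (grsCode α v k) ≤ finrank F (degreeLT F k) := Submodule.finrank_map_le _ _
    _ = k := by rw [(degreeLTEquiv F k).finrank_eq, finrank_fin_fun]

theorem grsCode_mul_le (α v w : ι → F) (a b : ℕ) :
    grsCode α v a * grsCode α w b ≤ grsCode α (v * w) (a + b - 1) := by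
  rw [Submodule.mul_le]
  rintro _ ⟨f, hf, rfl⟩ _ ⟨g, hg, rfl⟩
  refine ⟨f * g, ?_, funext fun i => ?_⟩
  · rw [SetLike.mem_coe, mem_degreeLT] at *
    rcases eq_or_ne (f * g) 0 with hfg | hfg
    · simp [hfg]
    rw [degree_eq_natDegree (left_ne_zero_of_mul hfg), Nat.cast_lt] at hf
    rw [degree_eq_natDegree (right_ne_zero_of_mul hfg), Nat.cast_lt] at hg
    rw [degree_eq_natDegree hfg, Nat.cast_lt,
      natDegree_mul (left_ne_zero_of_mul hfg) (right_ne_zero_of_mul hfg)]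
    omega
  · simp only [ev, LinearMap.coe_mk, AddHom.coe_mk, Pi.mul_apply, eval_mul]
    ring

variable [Finite ι] {α v w : ι → F} {D T : Submodule F (ι → F)}

theorem finrank_mul_le_of_le_grsCode {A B : Submodule F (ι → F)} {a b : ℕ}
    (hA : A ≤ grsCode α v a) (hB : B ≤ grsCode α w b) :
    finrank F (A * B : Submodule F (ι → F)) ≤ a + b - 1 :=
  (Submodule.finrank_mono ((mul_le_mul' hA hB).trans (grsCode_mul_le α v w a b))).trans
    (finrank_grsCode_le _ _ _)

theorem finrank_mul_self_le_of_le_grsCode_sup {r N : ℕ}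
    (hDT : D ≤ grsCode α v r ⊔ T) (hDN : D ≤ grsCode α w N) :
    finrank F (D * D : Submodule F (ι → F)) ≤ r + N - 1 + (finrank F T + 1).choose 2 := by
  obtain ⟨D₀, hD₀, G, rfl, -, hG⟩ := exists_sup_eq_of_le_sup hDT
  calc finrank F ((D₀ ⊔ G) * (D₀ ⊔ G) : Submodule F (ι → F))
      ≤ finrank F (D₀ * (D₀ ⊔ G) : Submodule F (ι → F)) + (finrank F G + 1).choose 2 :=
        finrank_sup_mul_self_le D₀ G
    _ ≤ r + N - 1 + (finrank F T + 1).choose 2 :=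
        Nat.add_le_add (finrank_mul_le_of_le_grsCode hD₀ hDN)
          (Nat.choose_le_choose 2 (Nat.add_le_add_right hG 1))

theorem finrank_mul_self_le_of_le_grsCode_sup_of_finrank_le {s ℓ : ℕ} (hDT : D ≤ grsCode α v s ⊔ T)
    (hD : finrank F D ≤ s) (hT : finrank F T ≤ ℓ) (hℓ : ℓ ≤ s) :
    finrank F (D * D : Submodule F (ι → F)) ≤ (ℓ + 2) * s - 1 - ℓ.choose 2 := by
  obtain ⟨D₀, hD₀, G, rfl, finrank_add, hG⟩ := exists_sup_eq_of_le_sup hDT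
  have square_sum := finrank_sup_mul_self_le D₀ G
  have product_sum := finrank_mul_sup_le D₀ G
  have degree_bound := finrank_mul_le_of_le_grsCode hD₀ hD₀
  have count := mul_add_choose_add_choose_le (finrank_add.trans_le hD) (hG.trans hT) hℓ
  rw [add_mul]
  rcases Nat.eq_zero_or_pos s with rfl | hs
  · simp only [mul_zero] at count ⊢
    omega
  · omega

end GRS

section Shortening

variable {F ι : Type*} [Field F] {α v : ι → F} {I : Finset ι}

theorem schurProduct_eq_mul (A B : Submodule F (ι → F)) : schurProduct F A B = A * B := by
  refine le_antisymm (Submodule.span_le.mpr ?_)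
    (Submodule.mul_le.mpr fun a ha b hb => Submodule.subset_span ⟨a, ha, b, hb, rfl⟩)
  rintro _ ⟨a, ha, b, hb, rfl⟩
  exact Submodule.mul_mem_mul ha hb

theorem nodal_dvd_of_ev_eq_zero (hα : Set.InjOn α I) (hv : ∀ i ∈ I, v i ≠ 0) {p : F[X]}
    (hp : ∀ i ∈ I, ev α v p i = 0) : nodal I α ∣ p :=
  Finset.prod_dvd_of_coprime
    (fun _ hi _ hj hij => isCoprime_X_sub_C_of_isUnit_sub
      (sub_ne_zero.mpr fun h => hij (hα hi hj h)).isUnit)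
    fun i hi => dvd_iff_isRoot.mpr ((mul_eq_zero.mp (hp i hi)).resolve_left (hv i hi))

/-- The column multipliers `v_j g(α_j)`, where `g = ∏_{i ∈ I} (X - α_i)`, of the generalized
Reed–Solomon codes that contain the shortening at `I` of a code with multipliers `v`. -/
noncomputable def shortenedMultiplier (α v : ι → F) (I : Finset ι) :
    {i // i ∉ (I : Set ι)} → F :=
  fun j => ev α v (nodal I α) j

theorem shorten_map_ev_le (hα : Set.InjOn α I) (hv : ∀ i ∈ I, v i ≠ 0) (P : Submodule F F[X]) :
    shorten (P.map (ev α v)) (I : Set ι) ≤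
      (P.map (divByMonicHom (nodal I α))).map
        (ev (α ∘ Subtype.val) (shortenedMultiplier α v I)) := by
  rintro _ ⟨_, ⟨⟨p, hp, rfl⟩, hker⟩, rfl⟩
  refine ⟨p /ₘ nodal I α, ⟨p, hp, rfl⟩, funext fun j => ?_⟩
  have nodal_dvd : nodal I α ∣ p :=
    nodal_dvd_of_ev_eq_zero hα hv fun i hi => congrFun hker ⟨i, hi⟩
  have nodal_mul_div : nodal I α * (p /ₘ nodal I α) = p := by
    have := modByMonic_add_div p (nodal I α)
    rwa [(modByMonic_eq_zero_iff_dvd nodal_monic).mpr nodal_dvd, zero_add] at this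
  calc v j * (nodal I α).eval (α j) * (p /ₘ nodal I α).eval (α j)
      = v j * (nodal I α * (p /ₘ nodal I α)).eval (α j) := by rw [eval_mul, mul_assoc]
    _ = v j * p.eval (α j) := by rw [nodal_mul_div]

theorem shorten_map_ev_le_grsCode_sup (hα : Set.InjOn α I) (hv : ∀ i ∈ I, v i ≠ 0) {N : ℕ}
    {P T : Submodule F F[X]} (hP : P ≤ degreeLT F N ⊔ T) :
    shorten (P.map (ev α v)) (I : Set ι) ≤
      grsCode (α ∘ Subtype.val) (shortenedMultiplier α v I) (N - I.card) ⊔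
        (T.map (divByMonicHom (nodal I α))).map
          (ev (α ∘ Subtype.val) (shortenedMultiplier α v I)) := by
  have quotient_degreeLT_le : (degreeLT F N).map (divByMonicHom (nodal I α)) ≤
      degreeLT F (N - I.card) := by
    simpa only [natDegree_nodal] using
      map_divByMonicHom_degreeLT_le (nodal_monic (s := I) (v := α)) N
  refine (shorten_map_ev_le hα hv P).trans ((Submodule.map_mono (Submodule.map_mono hP)).trans ?_)
  rw [Submodule.map_sup, Submodule.map_sup]
  exact sup_le_sup_right (Submodule.map_mono quotient_degreeLT_le) _

theorem shorten_map_ev_le_grsCode (hα : Set.InjOn α I) (hv : ∀ i ∈ I, v i ≠ 0) {N : ℕ}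
    {P : Submodule F F[X]} (hP : P ≤ degreeLT F N) :
    shorten (P.map (ev α v)) (I : Set ι) ≤
      grsCode (α ∘ Subtype.val) (shortenedMultiplier α v I) (N - I.card) := by
  have := shorten_map_ev_le_grsCode_sup hα hv (T := ⊥) (hP.trans le_sup_left)
  rwa [Submodule.map_bot, Submodule.map_bot, sup_bot_eq] at this

end Shortening

section TGRS

variable {F ι : Type*} [Field F] {k ℓ : ℕ}

theorem range_twistedMap_le_degreeLT_sup (t : Fin ℓ → ℕ) (h : Fin ℓ → Fin k) (η : Fin ℓ → F) :
    LinearMap.range (twistedMap k t h η) ≤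
      degreeLT F k ⊔ Submodule.span F (Set.range fun j => (X : F[X]) ^ (k - 1 + t j)) := by
  rintro _ ⟨f, rfl⟩
  simp only [twistedMap, LinearMap.add_apply, LinearMap.sum_apply, LinearMap.comp_apply]
  refine Submodule.add_mem_sup
    (Submodule.sum_mem _ fun i _ => monomial_coe_mem_degreeLT i _)
    (Submodule.sum_mem _ fun j _ => ?_)
  rw [← smul_X_eq_monomial]
  exact Submodule.smul_mem _ _ (Submodule.subset_span ⟨j, rfl⟩)

theorem range_twistedMap_le_degreeLT {t : Fin ℓ → ℕ} {m : ℕ} (htm : ∀ j, t j ≤ m)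
    (h : Fin ℓ → Fin k) (η : Fin ℓ → F) :
    LinearMap.range (twistedMap k t h η) ≤ degreeLT F (k + m) := by
  refine (range_twistedMap_le_degreeLT_sup t h η).trans
    (sup_le (degreeLT_mono (Nat.le_add_right k m)) (Submodule.span_le.mpr ?_))
  rintro _ ⟨j, rfl⟩
  have degree_lt : k - 1 + t j < k + m := by
    have := htm j
    have := (h j).pos
    omega
  exact mem_degreeLT.mpr ((degree_X_pow _).trans_lt (Nat.cast_lt.mpr degree_lt))

/-- The twisted generalized Reed–Solomon code `ev_{α,v}(P_{t,h,η}^{n,k})`. -/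
noncomputable def tgrsCode (α v : ι → F) (t : Fin ℓ → ℕ) (h : Fin ℓ → Fin k) (η : Fin ℓ → F) :
    Submodule F (ι → F) :=
  (LinearMap.range (twistedMap k t h η)).map (ev α v)

variable {α v : ι → F} {I : Finset ι}

theorem exists_shorten_tgrsCode_le_grsCode_sup (hα : Set.InjOn α I) (hv : ∀ i ∈ I, v i ≠ 0)
    (t : Fin ℓ → ℕ) (h : Fin ℓ → Fin k) (η : Fin ℓ → F) :
    ∃ T : Submodule F ({i // i ∉ (I : Set ι)} → F), finrank F T ≤ ℓ ∧
      shorten (tgrsCode α v t h η) (I : Set ι) ≤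
        grsCode (α ∘ Subtype.val) (shortenedMultiplier α v I) (k - I.card) ⊔ T := by
  refine ⟨_, ?_,
    shorten_map_ev_le_grsCode_sup hα hv (range_twistedMap_le_degreeLT_sup t h η)⟩
  rw [Submodule.map_span, Submodule.map_span, ← Set.range_comp, ← Set.range_comp]
  exact (finrank_range_le_card _).trans_eq (Fintype.card_fin ℓ)

theorem stmt11_general [Finite ι] (hα : Set.InjOn α I) (hv : ∀ i ∈ I, v i ≠ 0)
    (h : Fin ℓ → Fin k) {t : Fin ℓ → ℕ} (η : Fin ℓ → F) {tmax : ℕ} (htmax : ∀ j, t j ≤ tmax)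
    (hI : I.card + ℓ ≤ k)
    (hdim : finrank F (shorten (tgrsCode α v t h η) (I : Set ι)) ≤ k - I.card) :
    finrank F
        (schurProduct F (shorten (tgrsCode α v t h η) (I : Set ι))
          (shorten (tgrsCode α v t h η) (I : Set ι))) ≤
      min (min ((ℓ + 2) * (k - I.card) - 1 - ℓ * (ℓ - 1) / 2)
          (2 * k + tmax - 1 - 2 * I.card + ℓ * (ℓ + 1) / 2))
        (2 * (k + tmax - I.card) - 1) := by
  obtain ⟨T, hT, le_grsCode_sup⟩ := exists_shorten_tgrsCode_le_grsCode_sup hα hv t h η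
  have le_grsCode : shorten (tgrsCode α v t h η) (I : Set ι) ≤
      grsCode (α ∘ Subtype.val) (shortenedMultiplier α v I) (k + tmax - I.card) :=
    shorten_map_ev_le_grsCode hα hv (range_twistedMap_le_degreeLT htmax h η)
  rw [schurProduct_eq_mul]
  refine le_min (le_min ?_ ?_) ?_
  · rw [← Nat.choose_two_right]
    exact finrank_mul_self_le_of_le_grsCode_sup_of_finrank_le le_grsCode_sup hdim hT (by omega)
  · have triangle : (finrank F T + 1).choose 2 ≤ ℓ * (ℓ + 1) / 2 := by
      have := Nat.choose_le_choose 2 (Nat.add_le_add_right hT 1)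
      rwa [Nat.choose_two_right (ℓ + 1), Nat.add_sub_cancel, mul_comm (ℓ + 1)] at this
    have := finrank_mul_self_le_of_le_grsCode_sup le_grsCode_sup le_grsCode
    omega
  · have := finrank_mul_le_of_le_grsCode le_grsCode le_grsCode
    omega

end TGRS

/-- Upper bound for the Schur square of a shortening of a TGRS code with `ℓ` twists,
where `t_max` is the largest entry of the twist vector `t`, `|I| ≤ k − ℓ` and
`dim C_I = k − |I|`. -/
theorem stmt11 {F : Type*} [Field F] [Fintype F] {n k ℓ : ℕ}
    (hℓk : ℓ ≤ k) (hkn : k ≤ n) (hnq : n ≤ Fintype.card F)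
    (α v : Fin n → F) (hα : Function.Injective α) (hv : ∀ i, v i ≠ 0)
    (h : Fin ℓ → Fin k) (hh : Function.Injective h)
    (t : Fin ℓ → ℕ) (ht : Function.Injective t)
    (ht1 : ∀ j, 1 ≤ t j) (ht2 : ∀ j, t j ≤ n - k)
    (η : Fin ℓ → F) (hη : ∀ j, η j ≠ 0)
    (tmax : ℕ) (htmax : ∀ j, t j ≤ tmax) (htmax' : ∃ j, t j = tmax)
    (I : Finset (Fin n)) (hI : I.card ≤ k - ℓ)
    (hdim : Module.finrank F
      (shorten ((LinearMap.range (twistedMap k t h η)).map (ev α v)) (I : Set (Fin n))) =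
        k - I.card) :
    Module.finrank F
        (schurProduct F
          (shorten ((LinearMap.range (twistedMap k t h η)).map (ev α v)) (I : Set (Fin n)))
          (shorten ((LinearMap.range (twistedMap k t h η)).map (ev α v)) (I : Set (Fin n)))) ≤
      min (min ((ℓ + 2) * (k - I.card) - 1 - ℓ * (ℓ - 1) / 2)
          (2 * k + tmax - 1 - 2 * I.card + ℓ * (ℓ + 1) / 2))
        (2 * (k + tmax - I.card) - 1) :=
  stmt11_general hα.injOn (fun i _ => hv i) h η htmax (by omega) hdim.le
end

section
/- Let 1 ≤ k ≤ n ≤ q, let 0 ≤ h ≤ k−1, 1 ≤ t ≤ n−k, η ∈ F_q \ {0}, and let C = ev_{α,v}(P) where P = span{x^i : 0 ≤ i ≤ k−1, i ≠ h} ⊕ span(x^h + η x^{k−1+t}) (a single-twist TGRS code of dimension k). Then dim(C ⋆ C) ≤ 3k − 1 if t ≥ k, and dim(C ⋆ C) ≤ 2k + t if t < k. Moreover, for any I ⊆ {1,…,n} with |I| ≤ k − 1 such that dim(C_I) = k − |I|, one has dim(C_I ⋆ C_I) ≤ 3(k − |I|) − 1 if t ≥ k − |I|, and dim(C_I ⋆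 C_I) ≤ 2(k − |I|) + t if t < k − |I|. -/
open Polynomial

/-!
Every polynomial in the span of the monomials `X ^ i`, `i < k`, `i ≠ h`, and of the twist
`X ^ h + η X ^ d`, `d = k - 1 + t`, has degree `< k` or equal to `d`. Let `Q` be any space of
dimension at most `m` whose elements have degree `< m` or equal to `d`. Unless all degrees are
`< m`, in which case `dim (Q * Q) ≤ 2 m - 1`, it is `A + ⟨g⟩` with `A` the part of degree `< m`
and `g` of degree `d`, so `Q * Q = A * A + A * g + ⟨g * g⟩`. Here `dim (A * A) ≤ 2 m - 1` by
degrees, `dim (A * g) ≤ dim A ≤ m - 1`, and `dim (A * A + A * g) ≤ m + d` by degrees; the two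
bounds are the two ways of combining these estimates.

Shortening at `I` amounts to dividing by `∏ i ∈ I, (X - α i)`, which lowers `m` and `d` by `|I|`.
-/

section MulSubmodule

variable {R A : Type*} [CommSemiring R] [CommSemiring A] [Algebra R A]

theorem sup_mul_self_eq (S T : Submodule R A) :
    (S ⊔ T) * (S ⊔ T) = S * S ⊔ S * T ⊔ T * T := by
  rw [Submodule.sup_mul, Submodule.mul_sup, Submodule.mul_sup, mul_comm T S, sup_assoc,
    ← sup_assoc (S * T), sup_idem, ← sup_assoc]

theorem mul_span_singleton_eq_map (S : Submodule R A) (g : A) :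
    S * (R ∙ g) = S.map (LinearMap.mulRight R g) := by
  ext x
  simp [Submodule.mem_mul_span_singleton]

end MulSubmodule

theorem finrank_sup_span_singleton_le {K V : Type*} [Field K] [AddCommGroup V] [Module K V]
    (S : Submodule K V) [FiniteDimensional K S] (x : V) :
    Module.finrank K ↥(S ⊔ (K ∙ x)) ≤ Module.finrank K S + 1 := by
  have hx : Module.finrank K (K ∙ x) ≤ 1 := by
    simpa using finrank_span_le_card (R := K) ({x} : Set V)
  exact (Submodule.finrank_add_le_finrank_add_finrank S _).trans (by gcongr)

theorem finrank_mul_span_singleton_le {K A : Type*} [Field K] [CommRing A] [Algebra K A]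
    (S : Submodule K A) [FiniteDimensional K S] (g : A) :
    Module.finrank K ↥(S * (K ∙ g)) ≤ Module.finrank K S := by
  rw [mul_span_singleton_eq_map]
  exact Submodule.finrank_map_le _ _

theorem finrank_sup_span_mul_self_le_add_one {K A : Type*} [Field K] [CommRing A] [Algebra K A]
    (S : Submodule K A) [FiniteDimensional K S] (g : A) :
    Module.finrank K ↥((S ⊔ (K ∙ g)) * (S ⊔ (K ∙ g))) ≤
      Module.finrank K ↥(S * S ⊔ S * (K ∙ g)) + 1 := by
  have hS : S.FG := Module.Finite.iff_fg.1 inferInstance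
  have : FiniteDimensional K ↥(S * S ⊔ S * (K ∙ g)) := Module.Finite.iff_fg.2
    ((hS.mul hS).sup (hS.mul (Submodule.fg_span_singleton g)))
  rw [sup_mul_self_eq, Submodule.span_mul_span, Set.singleton_mul_singleton]
  exact finrank_sup_span_singleton_le _ _

section DegreeLT

variable {F : Type*} [Field F]

instance finiteDimensional_degreeLT (n : ℕ) : FiniteDimensional F (degreeLT F n) :=
  Module.Finite.equiv (degreeLTEquiv F n).symm

theorem finrank_degreeLT (n : ℕ) : Module.finrank F (degreeLT F n) = n := by
  rw [(degreeLTEquiv F n).finrank_eq, Module.finrank_fin_fun]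

theorem finrank_le_of_le_degreeLT {Q : Submodule F F[X]} {n : ℕ} (hQ : Q ≤ degreeLT F n) :
    Module.finrank F Q ≤ n :=
  (Submodule.finrank_mono hQ).trans_eq (finrank_degreeLT n)

theorem X_pow_mem_degreeLT {i n : ℕ} (hi : i < n) : (X ^ i : F[X]) ∈ degreeLT F n := by
  rw [mem_degreeLT, degree_X_pow]
  exact_mod_cast hi

theorem mul_le_degreeLT {A B : Submodule F F[X]} {a b c : ℕ} (hA : A ≤ degreeLT F a)
    (hB : B ≤ degreeLT F b) (hc : a + b ≤ c + 1) : A * B ≤ degreeLT F c := by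
  refine Submodule.mul_le.2 fun p hp q hq => ?_
  rcases eq_or_ne p 0 with rfl | hp0
  · simp
  rcases eq_or_ne q 0 with rfl | hq0
  · simp
  have hpa := (natDegree_lt_iff_degree_lt hp0).2 (mem_degreeLT.1 (hA hp))
  have hqb := (natDegree_lt_iff_degree_lt hq0).2 (mem_degreeLT.1 (hB hq))
  rw [mem_degreeLT, ← natDegree_lt_iff_degree_lt (mul_ne_zero hp0 hq0), natDegree_mul hp0 hq0]
  omega

theorem degree_add_C_mul_X_pow_lt_or_eq {p : F[X]} {m d : ℕ} (hp : p ∈ degreeLT F m) (c : F)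
    (hmd : m ≤ d) :
    (p + C c * X ^ d).degree < (m : WithBot ℕ) ∨ (p + C c * X ^ d).degree = (d : WithBot ℕ) := by
  rcases eq_or_ne c 0 with rfl | hc
  · left
    simpa using mem_degreeLT.1 hp
  · right
    rw [degree_add_eq_right_of_degree_lt, degree_C_mul_X_pow d hc]
    rw [degree_C_mul_X_pow d hc]
    exact (mem_degreeLT.1 hp).trans_le (by exact_mod_cast hmd)

theorem finrank_sup_span_mul_self_le {A : Submodule F F[X]} {g : F[X]} {m d : ℕ}
    (hA : A ≤ degreeLT F m) (hg : g.degree ≤ d) (hmd : m ≤ d + 1) :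
    Module.finrank F ↥((A ⊔ (F ∙ g)) * (A ⊔ (F ∙ g))) ≤ 2 * m - 1 + Module.finrank F A + 1 ∧
      Module.finrank F ↥((A ⊔ (F ∙ g)) * (A ⊔ (F ∙ g))) ≤ m + d + 1 := by
  have hg' : F ∙ g ≤ degreeLT F (d + 1) := by
    rwa [Submodule.span_singleton_le_iff_mem, degreeLT_succ_eq_degreeLE, mem_degreeLE]
  have hAA : A * A ≤ degreeLT F (2 * m - 1) := mul_le_degreeLT hA hA (by omega)
  have hAg : A * (F ∙ g) ≤ degreeLT F (m + d) := mul_le_degreeLT hA hg' (by omega)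
  have hsup : A * A ⊔ A * (F ∙ g) ≤ degreeLT F (m + d) :=
    sup_le (mul_le_degreeLT hA hA (by omega)) hAg
  have := Submodule.finiteDimensional_of_le hA
  have := Submodule.finiteDimensional_of_le hAA
  have := Submodule.finiteDimensional_of_le hAg
  have hsq := finrank_sup_span_mul_self_le_add_one A g
  refine ⟨hsq.trans (Nat.add_le_add_right ?_ 1),
    hsq.trans (Nat.add_le_add_right (finrank_le_of_le_degreeLT hsup) 1)⟩
  exact (Submodule.finrank_add_le_finrank_add_finrank _ _).trans
    (Nat.add_le_add (finrank_le_of_le_degreeLT hAA) (finrank_mul_span_singleton_le A g))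

end DegreeLT

section SingleTwist

variable {F : Type*} [Field F]

/-- The polynomial space underlying a single-twist code: all its elements have degree below `m`,
apart from one further possible degree `d`. Unlike an explicit list of generators, this
property passes to the polynomial spaces of shortened codes. -/
def IsSingleTwist (Q : Submodule F F[X]) (m d : ℕ) : Prop :=
  ∀ q ∈ Q, q.degree < m ∨ q.degree = d

namespace IsSingleTwist

variable {Q : Submodule F F[X]} {m d : ℕ}

theorem le_degreeLT (hQ : IsSingleTwist Q m d) {n : ℕ} (hm : m ≤ n) (hd : d < n) :
    Q ≤ degreeLT F n := by
  refine fun q hq => mem_degreeLT.2 ?_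
  rcases hQ q hq with hlt | heq
  · exact hlt.trans_le (by exact_mod_cast hm)
  · rw [heq]
    exact_mod_cast hd

theorem finiteDimensional (hQ : IsSingleTwist Q m d) : FiniteDimensional F Q :=
  Submodule.finiteDimensional_of_le
    (hQ.le_degreeLT (n := m + d + 1) (by omega) (by omega))

theorem eq_inf_degreeLT_sup_span (hQ : IsSingleTwist Q m d) {g : F[X]} (hg : g ∈ Q)
    (hgd : g.degree = d) : Q = Q ⊓ degreeLT F m ⊔ (F ∙ g) := by
  refine le_antisymm (fun q hq => ?_)
    (sup_le inf_le_left ((Submodule.span_singleton_le_iff_mem _ _).2 hg))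
  have hg0 : g.coeff d ≠ 0 := coeff_ne_zero_of_eq_degree hgd
  set c := q.coeff d / g.coeff d
  have hr : q - c • g ∈ Q := Q.sub_mem hq (Q.smul_mem c hg)
  have hr0 : (q - c • g).coeff d = 0 := by simp [c, hg0]
  have hrm : q - c • g ∈ degreeLT F m :=
    mem_degreeLT.2 ((hQ _ hr).resolve_right fun h => coeff_ne_zero_of_eq_degree h hr0)
  exact Submodule.mem_sup.2
    ⟨_, ⟨hr, hrm⟩, _, Submodule.mem_span_singleton.2 ⟨c, rfl⟩, sub_add_cancel q (c • g)⟩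

theorem le_degreeLT_or_exists_sup_span (hQ : IsSingleTwist Q m d) :
    Q ≤ degreeLT F m ∨ ∃ A ≤ degreeLT F m, ∃ g : F[X], g.degree = d ∧
      Module.finrank F A < Module.finrank F Q ∧ Q = A ⊔ (F ∙ g) := by
  refine or_iff_not_imp_left.2 fun hle => ?_
  obtain ⟨g, hg, hgm⟩ := SetLike.not_le_iff_exists.1 hle
  have hgd : g.degree = d := (hQ g hg).resolve_left (mt mem_degreeLT.2 hgm)
  have := hQ.finiteDimensional
  exact ⟨Q ⊓ degreeLT F m, inf_le_right, g, hgd,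
    Submodule.finrank_lt_finrank_of_lt (inf_lt_left.2 hle), hQ.eq_inf_degreeLT_sup_span hg hgd⟩

theorem finrank_mul_self_le (hQ : IsSingleTwist Q m d) (hdim : Module.finrank F Q ≤ m)
    (hmd : m ≤ d) :
    Module.finrank F ↥(Q * Q) ≤ 3 * m - 1 ∧ Module.finrank F ↥(Q * Q) ≤ m + d + 1 := by
  rcases hQ.le_degreeLT_or_exists_sup_span with hle | ⟨A, hA, g, hg, hlt, rfl⟩
  · have := finrank_le_of_le_degreeLT (mul_le_degreeLT hle hle (c := 2 * m - 1) (by omega))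
    omega
  · have := finrank_sup_span_mul_self_le hA hg.le (by omega)
    omega

theorem comap_mulLeft (hQ : IsSingleTwist Q m d) {G : F[X]} (hG : G ≠ 0) :
    IsSingleTwist (Q.comap (LinearMap.mulLeft F G)) (m - G.natDegree) (d - G.natDegree) := by
  intro q hq
  rcases eq_or_ne q 0 with rfl | hq0
  · exact Or.inl (by simp)
  have hGq := mul_ne_zero hG hq0
  have hdeg := hQ (G * q) hq
  rw [← natDegree_lt_iff_degree_lt hGq, degree_eq_iff_natDegree_eq hGq,
    natDegree_mul hG hq0] at hdeg
  rw [← natDegree_lt_iff_degree_lt hq0, degree_eq_iff_natDegree_eq hq0]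
  omega

end IsSingleTwist

/-- The polynomial space of the single-twist code with hook `h`, twist `t` and coefficient `η`. -/
noncomputable def singleTwistPolynomials (k h t : ℕ) (η : F) : Submodule F F[X] :=
  Submodule.span F {p : F[X] | ∃ i < k, i ≠ h ∧ p = X ^ i} ⊔
    Submodule.span F {(X : F[X]) ^ h + C η * X ^ (k - 1 + t)}

variable {k h : ℕ}

theorem span_X_pow_ne_le_degreeLT :
    Submodule.span F {p : F[X] | ∃ i < k, i ≠ h ∧ p = X ^ i} ≤ degreeLT F k := by
  rw [Submodule.span_le]
  rintro _ ⟨i, hi, -, rfl⟩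
  exact X_pow_mem_degreeLT hi

theorem isSingleTwist_singleTwistPolynomials (hh : h < k) {t : ℕ} (ht : 1 ≤ t) (η : F) :
    IsSingleTwist (singleTwistPolynomials k h t η) k (k - 1 + t) := by
  intro p hp
  obtain ⟨a, ha, _, hb, rfl⟩ := Submodule.mem_sup.1 hp
  obtain ⟨c, rfl⟩ := Submodule.mem_span_singleton.1 hb
  have hlow : a + c • X ^ h ∈ degreeLT F k :=
    add_mem (span_X_pow_ne_le_degreeLT ha) (Submodule.smul_mem _ c (X_pow_mem_degreeLT hh))
  have hsplit : a + c • (X ^ h + C η * X ^ (k - 1 + t)) =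
      a + c • X ^ h + C (c * η) * X ^ (k - 1 + t) := by
    simp only [smul_eq_C_mul, C_mul]
    ring
  rw [hsplit]
  exact degree_add_C_mul_X_pow_lt_or_eq hlow (c * η) (by omega)

theorem finrank_singleTwistPolynomials_le (hh : h < k) (t : ℕ) (η : F) :
    Module.finrank F (singleTwistPolynomials k h t η) ≤ k := by
  classical
  have hmono : {p : F[X] | ∃ i < k, i ≠ h ∧ p = X ^ i} =
      (((Finset.range k).erase h).image (X ^ · : ℕ → F[X]) : Finset F[X]) := by
    ext p
    simp [and_assoc, and_left_comm, eq_comm]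
  have hcard : Module.finrank F (Submodule.span F {p : F[X] | ∃ i < k, i ≠ h ∧ p = X ^ i}) ≤
      k - 1 := by
    rw [hmono]
    refine (finrank_span_finset_le_card _).trans (Finset.card_image_le.trans_eq ?_)
    rw [Finset.card_erase_of_mem (Finset.mem_range.2 hh), Finset.card_range]
  have := Submodule.finiteDimensional_of_le (span_X_pow_ne_le_degreeLT (F := F) (k := k) (h := h))
  refine (finrank_sup_span_singleton_le _ _).trans ?_
  omega

end SingleTwist

section Evaluation

variable {F ι : Type*} [Field F] {α v : ι → F}

@[simp]
theorem ev_apply (α v : ι → F) (f : F[X]) (i : ι) : ev α v f i = v i * f.eval (α i) :=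
  rfl

theorem ev_mul_ev (α v w : ι → F) (f g : F[X]) :
    ev α v f * ev α w g = ev α (v * w) (f * g) := by
  ext i
  simp only [Pi.mul_apply, ev_apply, eval_mul]
  ring

theorem schurProduct_map_ev (α v w : ι → F) (A B : Submodule F F[X]) :
    schurProduct F (A.map (ev α v)) (B.map (ev α w)) = (A * B).map (ev α (v * w)) := by
  rw [Submodule.mul_eq_span_mul_set, Submodule.map_span, schurProduct]
  congr 1
  ext x
  constructor
  · rintro ⟨_, ⟨f, hf, rfl⟩, _, ⟨g, hg, rfl⟩, rfl⟩
    exact ⟨f * g, Set.mul_mem_mul hf hg, (ev_mul_ev α v w f g).symm⟩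
  · rintro ⟨_, ⟨f, hf, g, hg, rfl⟩, rfl⟩
    exact ⟨_, ⟨f, hf, rfl⟩, _, ⟨g, hg, rfl⟩, (ev_mul_ev α v w f g).symm⟩

theorem IsSingleTwist.finrank_schurProduct_map_ev_le {Q : Submodule F F[X]} {m d : ℕ}
    (hQ : IsSingleTwist Q m d) (hdim : Module.finrank F Q ≤ m) (hmd : m ≤ d) (α v : ι → F) :
    Module.finrank F (schurProduct F (Q.map (ev α v)) (Q.map (ev α v))) ≤ 3 * m - 1 ∧
      Module.finrank F (schurProduct F (Q.map (ev α v)) (Q.map (ev α v))) ≤ m + d + 1 := by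
  have hfg : Q.FG := Module.Finite.iff_fg.1 hQ.finiteDimensional
  have : FiniteDimensional F ↥(Q * Q) := Module.Finite.iff_fg.2 (hfg.mul hfg)
  have hmap := Submodule.finrank_map_le (ev α (v * v)) (Q * Q)
  rw [schurProduct_map_ev]
  exact (hQ.finrank_mul_self_le hdim hmd).imp hmap.trans hmap.trans

theorem finrank_map_ev_of_le_degreeLT [Fintype ι] (hα : Function.Injective α)
    (hv : ∀ i, v i ≠ 0) {Q : Submodule F F[X]} (hQ : Q ≤ degreeLT F (Fintype.card ι)) :
    Module.finrank F (Q.map (ev α v)) = Module.finrank F Q := by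
  have hinj : Function.Injective ((ev α v).domRestrict Q) := by
    refine (injective_iff_map_eq_zero _).2 fun q hq => Subtype.ext ?_
    refine eq_zero_of_degree_lt_of_eval_index_eq_zero Finset.univ hα.injOn
      (mem_degreeLT.1 (hQ q.2)) fun i _ => ?_
    exact (mul_eq_zero.1 (congrFun hq i)).resolve_left (hv i)
  rw [← LinearMap.range_domRestrict, LinearMap.finrank_range_of_inj hinj]

end Evaluation

section Shortening

variable {F ι : Type*} [Field F] {α v : ι → F}

theorem mem_shorten {C : Submodule F (ι → F)} {I : Set ι} {x : {i // i ∉ I} → F} :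
    x ∈ shorten C I ↔ ∃ c ∈ C, (∀ i ∈ I, c i = 0) ∧ (fun j : {i // i ∉ I} => c j) = x := by
  simp [shorten, LinearMap.funLeft, funext_iff, and_assoc]

theorem nodal_dvd_iff {I : Finset ι} (hα : Set.InjOn α I) {p : F[X]} :
    Lagrange.nodal I α ∣ p ↔ ∀ i ∈ I, p.eval (α i) = 0 := by
  refine ⟨fun hdvd i hi => eval_eq_zero_of_dvd_of_eval_eq_zero hdvd
    (Lagrange.eval_nodal_at_node hi), fun hroot => ?_⟩
  refine Finset.prod_dvd_of_coprime (fun i hi j hj hij => ?_)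
    fun i hi => dvd_iff_isRoot.2 (hroot i hi)
  exact isCoprime_X_sub_C_of_isUnit_sub (sub_ne_zero.2 (hα.ne hi hj hij)).isUnit

theorem shorten_map_ev {I : Finset ι} (hα : Set.InjOn α I) (hv : ∀ i ∈ I, v i ≠ 0)
    (P : Submodule F F[X]) :
    shorten (P.map (ev α v)) (I : Set ι) =
      (P.comap (LinearMap.mulLeft F (Lagrange.nodal I α))).map
        (ev (fun j : {i // i ∉ (I : Set ι)} => α j)
          fun j => v j * (Lagrange.nodal I α).eval (α j)) := by
  ext x
  rw [mem_shorten]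
  constructor
  · rintro ⟨_, ⟨p, hp, rfl⟩, hzero, rfl⟩
    obtain ⟨q, rfl⟩ := (nodal_dvd_iff hα).2 fun i hi =>
      (mul_eq_zero.1 (hzero i hi)).resolve_left (hv i hi)
    exact ⟨q, hp, funext fun j => by simp [mul_assoc]⟩
  · rintro ⟨q, hq, rfl⟩
    exact ⟨_, ⟨_, hq, rfl⟩, fun i hi => by simp [Lagrange.eval_nodal_at_node hi],
      funext fun j => by simp [mul_assoc]⟩

theorem IsSingleTwist.finrank_schurProduct_shorten_le [Fintype ι] (hα : Function.Injective α)
    (hv : ∀ i, v i ≠ 0) {P : Submodule F F[X]} {k d : ℕ} (hP : IsSingleTwist P k d)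
    (hkd : k ≤ d) (hd : d < Fintype.card ι) {I : Finset ι} (hI : I.card < k)
    (hdim : Module.finrank F (shorten (P.map (ev α v)) (I : Set ι)) ≤ k - I.card) :
    Module.finrank F (schurProduct F (shorten (P.map (ev α v)) (I : Set ι))
        (shorten (P.map (ev α v)) (I : Set ι))) ≤ 3 * (k - I.card) - 1 ∧
      Module.finrank F (schurProduct F (shorten (P.map (ev α v)) (I : Set ι))
        (shorten (P.map (ev α v)) (I : Set ι))) ≤ (k - I.card) + (d - I.card) + 1 := by
  classical
  have hQ := hP.comap_mulLeft (Lagrange.nodal_ne_zero (s := I) (v := α))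
  rw [Lagrange.natDegree_nodal] at hQ
  rw [shorten_map_ev hα.injOn fun i _ => hv i] at hdim ⊢
  refine hQ.finrank_schurProduct_map_ev_le ?_ (by omega) _ _
  have hα' : Function.Injective fun j : {i // i ∉ (I : Set ι)} => α j :=
    hα.comp Subtype.val_injective
  have hv' (j : {i // i ∉ (I : Set ι)}) : v j * (Lagrange.nodal I α).eval (α j) ≠ 0 :=
    mul_ne_zero (hv j) (Lagrange.eval_nodal_not_at_node fun i hi =>
      hα.ne fun hji => j.2 (hji ▸ hi))
  have hcard : Fintype.card {i // i ∉ (I : Set ι)} = Fintype.card ι - I.card := by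
    simp
  have hle := hQ.le_degreeLT (n := Fintype.card {i // i ∉ (I : Set ι)}) (by omega) (by omega)
  rwa [finrank_map_ev_of_le_degreeLT hα' hv' hle] at hdim

end Shortening

theorem stmt12_general {F ι : Type*} [Field F] [Fintype ι] {k h t : ℕ} (hh : h < k)
    (ht : 1 ≤ t) (htn : k + t ≤ Fintype.card ι) (η : F) {α v : ι → F} (hα : Function.Injective α)
    (hv : ∀ i, v i ≠ 0) :
    let C : Submodule F (ι → F) := (singleTwistPolynomials k h t η).map (ev α v)
    (Module.finrank F (schurProduct F C C) ≤ 3 * k - 1 ∧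
      Module.finrank F (schurProduct F C C) ≤ 2 * k + t) ∧
    ∀ I : Finset ι, I.card < k →
      Module.finrank F (shorten C (I : Set ι)) ≤ k - I.card →
      Module.finrank F (schurProduct F (shorten C (I : Set ι)) (shorten C (I : Set ι))) ≤
          3 * (k - I.card) - 1 ∧
        Module.finrank F (schurProduct F (shorten C (I : Set ι)) (shorten C (I : Set ι))) ≤
          2 * (k - I.card) + t := by
  intro C
  have hP := isSingleTwist_singleTwistPolynomials hh ht η
  refine ⟨?_, fun I hI hdim => ?_⟩
  · exact (hP.finrank_schurProduct_map_ev_le (finrank_singleTwistPolynomials_le hh t η)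
      (by omega) α v).imp_right (·.trans (by omega))
  · exact (hP.finrank_schurProduct_shorten_le hα hv (by omega) (by omega) hI hdim).imp_right
      (·.trans (by omega))

/-- Schur-square dimension bounds for a single-twist TGRS code and its shortenings:
`dim C² ≤ 3k−1` if `t ≥ k` and `dim C² ≤ 2k+t` if `t < k`; and for a shortening at `I`
with `|I| ≤ k−1` and `dim C_I = k−|I|`, `dim C_I² ≤ 3(k−|I|)−1` if `t ≥ k−|I|` and
`dim C_I² ≤ 2(k−|I|)+t` if `t < k−|I|`. -/
theorem stmt12 {F : Type*} [Field F] [Fintype F] {n k h t : ℕ}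
    (hk1 : 1 ≤ k) (hkn : k ≤ n) (hnq : n ≤ Fintype.card F)
    (hh : h ≤ k - 1) (ht1 : 1 ≤ t) (ht2 : t ≤ n - k)
    (η : F) (hη : η ≠ 0)
    (α v : Fin n → F) (hα : Function.Injective α) (hv : ∀ i, v i ≠ 0) :
    let P : Submodule F (Polynomial F) :=
      Submodule.span F {p : Polynomial F | ∃ i < k, i ≠ h ∧ p = Polynomial.X ^ i} ⊔
      Submodule.span F
        {(Polynomial.X : Polynomial F) ^ h + Polynomial.C η * Polynomial.X ^ (k - 1 + t)}
    let C : Submodule F (Fin n → F) := P.map (ev α v)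
    (k ≤ t → Module.finrank F (schurProduct F C C) ≤ 3 * k - 1) ∧
    (t < k → Module.finrank F (schurProduct F C C) ≤ 2 * k + t) ∧
    ∀ I : Finset (Fin n), I.card ≤ k - 1 →
      Module.finrank F (shorten C (I : Set (Fin n))) = k - I.card →
      ((k - I.card ≤ t →
          Module.finrank F
            (schurProduct F (shorten C (I : Set (Fin n))) (shorten C (I : Set (Fin n)))) ≤
          3 * (k - I.card) - 1) ∧
       (t < k - I.card →
          Module.finrank F
            (schurProduct F (shorten C (I : Set (Fin n))) (shorten C (I : Set (Fin n)))) ≤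
          2 * (k - I.card) + t)) := by
  have ⟨hC, hI⟩ := stmt12_general (by omega : h < k) ht1 (by simp; omega) η hα hv
  exact ⟨fun _ => hC.1, fun _ => hC.2, fun I hs hdim =>
    ⟨fun _ => (hI I (by omega) hdim.le).1, fun _ => (hI I (by omega) hdim.le).2⟩⟩
end

section
/- Let F be a field, k ≥ 1 an integer, and let f, g ∈ F[x] be nonzero polynomials of degree < k. Then dim( f·F[x]_{<k} + g·F[x]_{<k} ) = k + max{deg f, deg g} − deg(gcd(f, g)), where f·F[x]_{<k} = { f h : h ∈ F[x], deg h < k }. -/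
open Polynomial

/-!
Let `d` be the gcd, `f = d a` and `g = d b`. Multiplication by `d` is injective, so `f`, `g` may be
replaced by the coprime polynomials `a`, `b`. Then `a F[x]_{<m} ∩ b F[x]_{<n}` consists of the
products `a b t` with `deg (b t) < m` and `deg (a t) < n`. These are two bounds on `deg t`, so the
dimension of the intersection, and with it that of the sum, can be read off.
-/

theorem exists_isCoprime_and_eq_gcd_mul {R : Type*} [EuclideanDomain R] [DecidableEq R] (x y : R) :
    ∃ a b, IsCoprime a b ∧
      x = EuclideanDomain.gcd x y * a ∧ y = EuclideanDomain.gcd x y * b := by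
  let := EuclideanDomain.gcdMonoid R
  obtain ⟨a, b, hx, hy, hab⟩ := extract_gcd x y
  exact ⟨a, b, (gcd_isUnit_iff a b).1 hab, hx, hy⟩

theorem map_mulLeft_inf_map_mulLeft_of_isCoprime {R A : Type*} [CommSemiring R] [CommRing A]
    [Algebra R A] {a b : A} (hab : IsCoprime a b) (S T : Submodule R A) :
    S.map (LinearMap.mulLeft R a) ⊓ T.map (LinearMap.mulLeft R b) =
      (S.comap (LinearMap.mulLeft R b) ⊓ T.comap (LinearMap.mulLeft R a)).map
        (LinearMap.mulLeft R (a * b)) := by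
  ext p
  simp only [Submodule.mem_inf, Submodule.mem_map, Submodule.mem_comap, LinearMap.mulLeft_apply]
  constructor
  · rintro ⟨⟨x, hx, rfl⟩, y, hy, hyx⟩
    obtain ⟨u, v, huv⟩ := hab
    have hbt : b * (u * y + v * x) = x := by linear_combination u * hyx + x * huv
    have hat : a * (u * y + v * x) = y := by linear_combination y * huv - v * hyx
    exact ⟨u * y + v * x, ⟨hbt.symm ▸ hx, hat.symm ▸ hy⟩, by rw [mul_assoc, hbt]⟩
  · rintro ⟨t, ⟨hbt, hat⟩, rfl⟩
    exact ⟨⟨b * t, hbt, by ring⟩, a * t, hat, by ring⟩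

theorem comap_mulLeft_degreeLT {R : Type*} [CommSemiring R] [NoZeroDivisors R] {p : R[X]}
    (hp : p ≠ 0) (n : ℕ) :
    (degreeLT R n).comap (LinearMap.mulLeft R p) = degreeLT R (n - p.natDegree) := by
  ext t
  obtain rfl | ht := eq_or_ne t 0
  · simp only [zero_mem]
  · rw [Submodule.mem_comap, LinearMap.mulLeft_apply, mem_degreeLT, mem_degreeLT,
      ← natDegree_lt_iff_degree_lt (mul_ne_zero hp ht), ← natDegree_lt_iff_degree_lt ht,
      natDegree_mul hp ht, lt_tsub_iff_left]

theorem finrank_degreeLT_s14 (R : Type*) [Semiring R] [StrongRankCondition R] (n : ℕ) :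
    Module.finrank R (degreeLT R n) = n := by
  rw [(degreeLTEquiv R n).finrank_eq, Module.finrank_fin_fun]

theorem finrank_map_mulLeft {R A : Type*} [CommSemiring R] [Semiring A] [Algebra R A]
    {a : A} (ha : IsLeftRegular a) (S : Submodule R A) :
    Module.finrank R (S.map (LinearMap.mulLeft R a)) = Module.finrank R S :=
  (S.equivMapOfInjective _ ha).finrank_eq.symm

section

variable {F : Type*} [Field F]

theorem finrank_map_mulLeft_degreeLT_inf_of_isCoprime {a b : F[X]} (hab : IsCoprime a b)
    (ha : a ≠ 0) (hb : b ≠ 0) (m n : ℕ) :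
    Module.finrank F ↥((degreeLT F m).map (LinearMap.mulLeft F a) ⊓
        (degreeLT F n).map (LinearMap.mulLeft F b)) =
      min (m - b.natDegree) (n - a.natDegree) := by
  rw [map_mulLeft_inf_map_mulLeft_of_isCoprime hab, comap_mulLeft_degreeLT hb,
    comap_mulLeft_degreeLT ha, ← Monotone.map_inf fun _ _ => degreeLT_mono,
    finrank_map_mulLeft (IsRegular.of_ne_zero (mul_ne_zero ha hb)).left, finrank_degreeLT_s14]

theorem finrank_map_mulLeft_degreeLT_sup_of_isCoprime {a b : F[X]} (hab : IsCoprime a b)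
    (ha : a ≠ 0) (hb : b ≠ 0) (m n : ℕ) :
    Module.finrank F ↥((degreeLT F m).map (LinearMap.mulLeft F a) ⊔
        (degreeLT F n).map (LinearMap.mulLeft F b)) =
      m + n - min (m - b.natDegree) (n - a.natDegree) := by
  have hdim := Submodule.finrank_sup_add_finrank_inf_eq
    ((degreeLT F m).map (LinearMap.mulLeft F a)) ((degreeLT F n).map (LinearMap.mulLeft F b))
  rw [finrank_map_mulLeft_degreeLT_inf_of_isCoprime hab ha hb,
    finrank_map_mulLeft (IsRegular.of_ne_zero ha).left,
    finrank_map_mulLeft (IsRegular.of_ne_zero hb).left, finrank_degreeLT_s14, finrank_degreeLT_s14] at hdim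
  exact Nat.eq_sub_of_add_eq hdim

-- The truncated subtractions are intended: when one of them truncates, the intersection of the two
-- summands is zero.
theorem stmt14_general [DecidableEq F] {f g : F[X]} (hf : f ≠ 0) (hg : g ≠ 0) (m n : ℕ) :
    Module.finrank F ↥((degreeLT F m).map (LinearMap.mulLeft F f) ⊔
        (degreeLT F n).map (LinearMap.mulLeft F g)) =
      m + n - min (m + (EuclideanDomain.gcd f g).natDegree - g.natDegree)
        (n + (EuclideanDomain.gcd f g).natDegree - f.natDegree) := by
  obtain ⟨a, b, hab, hfa, hgb⟩ := exists_isCoprime_and_eq_gcd_mul f g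
  generalize EuclideanDomain.gcd f g = d at hfa hgb ⊢
  subst hfa hgb
  have hd := left_ne_zero_of_mul hf
  have ha := right_ne_zero_of_mul hf
  have hb := right_ne_zero_of_mul hg
  rw [LinearMap.mulLeft_mul, LinearMap.mulLeft_mul, Submodule.map_comp, Submodule.map_comp,
    ← Submodule.map_sup, finrank_map_mulLeft (IsRegular.of_ne_zero hd).left,
    finrank_map_mulLeft_degreeLT_sup_of_isCoprime hab ha hb, natDegree_mul hd ha,
    natDegree_mul hd hb]
  congr 2 <;> omega

end

/-- For nonzero `f, g ∈ F[x]` of degree `< k`,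
`dim(f·F[x]_{<k} + g·F[x]_{<k}) = k + max{deg f, deg g} − deg(gcd(f, g))`. -/
theorem stmt14 {F : Type*} [Field F] [DecidableEq F] {k : ℕ} (hk : 1 ≤ k)
    (f g : Polynomial F) (hf : f ≠ 0) (hg : g ≠ 0)
    (hfk : f.degree < (k : WithBot ℕ)) (hgk : g.degree < (k : WithBot ℕ)) :
    Module.finrank F
        ↥((Polynomial.degreeLT F k).map (LinearMap.mulLeft F f) ⊔
          (Polynomial.degreeLT F k).map (LinearMap.mulLeft F g)) =
      k + max f.natDegree g.natDegree - (EuclideanDomain.gcd f g).natDegree := by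
  rw [← natDegree_lt_iff_degree_lt hf] at hfk
  rw [← natDegree_lt_iff_degree_lt hg] at hgk
  have hdf := natDegree_le_of_dvd (EuclideanDomain.gcd_dvd_left f g) hf
  rw [stmt14_general hf hg]
  omega
end

section
/- Let F_q be a finite field with q ≥ 11 elements and let k, t be integers with k ≥ 17 and t ≥ 17. Let G be the set of pairs (f, g) of nonzero polynomials over F_q of degree < k satisfying the gcd condition: deg(gcd(f, g)) < max{deg f, deg g} − 5 if t > k, and deg(gcd(f, g)) < max{deg f, deg g} − (k − t) − 5 if t ≤ k. Then |G| ≥ (1 − 1/q^7) · q^{2k}; that is, the proportion of pairs in F_q[x]_{<k} × F_q[x]_{<k} (which has q^{2k} elements) satisfying the gcd condition is at least 1 − 1/q^7. -/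
open Polynomial

/-!
Call a pair bad if `r := max (deg f) (deg g) - deg (gcd f g)` is at most `s`. Dividing by the gcd
writes a bad pair as `(d * a, d * b)` with `deg d < k - r` and `deg a, deg b ≤ r`, which leaves at
most `q ^ (k - r) * q ^ (2 * (r + 1)) = q ^ (k + r + 2)` pairs for each `r`. Summing over `r ≤ s`
gives fewer than `q ^ (k + s + 3)` bad pairs. Both cases of the gcd condition ask that the pair not
be bad for `s = (k - t) + 5`, where the subtraction is truncated. A pair with a zero entry has
`r = 0`, so it is always bad.
-/

section Counting

variable (R : Type*) [Semiring R]

theorem ncard_degreeLT (n : ℕ) : (degreeLT R n : Set R[X]).ncard = Nat.card R ^ n := by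
  rw [← Nat.card_coe_set_eq]
  exact (Nat.card_congr (degreeLTEquiv R n).toEquiv).trans (by rw [Nat.card_fun, Nat.card_fin])

theorem finite_degreeLT [Finite R] (n : ℕ) : (degreeLT R n : Set R[X]).Finite :=
  Set.finite_coe_iff.1 (Finite.of_equiv _ (degreeLTEquiv R n).toEquiv.symm)

/-- The pairs `(d * a, d * b)` with a common factor `d` of degree `< m` and cofactors `a`, `b` of
degree `< n`; the pairs to be discarded are covered by sets of this form. -/
def commonMultiples (m n : ℕ) : Set (R[X] × R[X]) :=
  (fun x : R[X] × R[X] × R[X] => (x.1 * x.2.1, x.1 * x.2.2)) ''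
    ((degreeLT R m : Set R[X]) ×ˢ (degreeLT R n : Set R[X]) ×ˢ (degreeLT R n : Set R[X]))

variable [Finite R] (m n : ℕ)

theorem finite_commonMultiples : (commonMultiples R m n).Finite :=
  ((finite_degreeLT R m).prod ((finite_degreeLT R n).prod (finite_degreeLT R n))).image _

theorem ncard_commonMultiples_le :
    (commonMultiples R m n).ncard ≤ Nat.card R ^ (m + 2 * n) := by
  refine (Set.ncard_image_le
    ((finite_degreeLT R m).prod ((finite_degreeLT R n).prod (finite_degreeLT R n)))).trans_eq ?_
  simp only [Set.ncard_prod, ncard_degreeLT]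
  ring

theorem sum_ncard_commonMultiples_le [Nontrivial R] {k s : ℕ} (hs : s ≤ k) :
    ∑ r ∈ Finset.range (s + 1), (commonMultiples R (k - r) (r + 1)).ncard ≤
      Nat.card R ^ (k + s + 3) := by
  calc ∑ r ∈ Finset.range (s + 1), (commonMultiples R (k - r) (r + 1)).ncard
      ≤ ∑ r ∈ Finset.range (s + 1), Nat.card R ^ (k + 2) * Nat.card R ^ r := by
        refine Finset.sum_le_sum fun r hr => (ncard_commonMultiples_le R _ _).trans_eq ?_
        have : r ≤ k := (Nat.lt_succ_iff.1 (Finset.mem_range.1 hr)).trans hs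
        rw [← pow_add]
        congr 1
        omega
    _ = Nat.card R ^ (k + 2) * ∑ r ∈ Finset.range (s + 1), Nat.card R ^ r := by
        rw [Finset.mul_sum]
    _ ≤ Nat.card R ^ (k + 2) * Nat.card R ^ (s + 1) :=
        Nat.mul_le_mul_left _ (Nat.geomSum_lt Finite.one_lt_card fun _ => Finset.mem_range.1).le
    _ = Nat.card R ^ (k + s + 3) := by ring

end Counting

section CommonDivisor

variable {R : Type*} [Semiring R] {d f g : R[X]} {k r : ℕ}

theorem natDegree_lt_of_mem_degreeLT (hk : 0 < k) (hf : f ∈ degreeLT R k) :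
    f.natDegree < k := by
  rcases eq_or_ne f 0 with rfl | hf₀
  · simpa
  · exact (natDegree_lt_iff_degree_lt hf₀).2 (mem_degreeLT.1 hf)

variable [NoZeroDivisors R]

theorem mem_degreeLT_succ_of_natDegree_mul_le (hd : d ≠ 0)
    (h : (d * f).natDegree ≤ d.natDegree + r) : f ∈ degreeLT R (r + 1) := by
  rw [degreeLT_succ_eq_degreeLE, mem_degreeLE, ← natDegree_le_iff_degree_le]
  rcases eq_or_ne f 0 with rfl | hf
  · simp
  · rw [natDegree_mul hd hf] at h
    omega

theorem mem_commonMultiples_of_dvd (hk : 0 < k) (hf : f ∈ degreeLT R k)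
    (hg : g ∈ degreeLT R k) (hdf : d ∣ f) (hdg : d ∣ g)
    (h : max f.natDegree g.natDegree = d.natDegree + r) :
    (f, g) ∈ commonMultiples R (k - r) (r + 1) := by
  obtain ⟨a, rfl⟩ := hdf
  obtain ⟨b, rfl⟩ := hdg
  rcases eq_or_ne d 0 with rfl | hd
  · exact ⟨0, by simp, by simp⟩
  have hd_lt : d.natDegree < k - r := by
    have := natDegree_lt_of_mem_degreeLT hk hf
    have := natDegree_lt_of_mem_degreeLT hk hg
    omega
  refine ⟨(d, a, b), ⟨?_, ?_, ?_⟩, rfl⟩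
  · exact mem_degreeLT.2 ((natDegree_lt_iff_degree_lt hd).1 hd_lt)
  · exact mem_degreeLT_succ_of_natDegree_mul_le hd ((le_max_left _ _).trans_eq h)
  · exact mem_degreeLT_succ_of_natDegree_mul_le hd ((le_max_right _ _).trans_eq h)

end CommonDivisor

section GcdGap

variable (F : Type*) [Field F] [DecidableEq F] (k s : ℕ)

/-- The pairs of polynomials of degree `< k` whose gcd has degree less than
`max (deg f) (deg g) - s`. The inequality is stated additively to avoid truncated subtraction. -/
def gcdGapPairs : Set (F[X] × F[X]) :=
  {p | p.1 ∈ degreeLT F k ∧ p.2 ∈ degreeLT F k ∧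
    (EuclideanDomain.gcd p.1 p.2).natDegree + s < max p.1.natDegree p.2.natDegree}

variable {F k s}

theorem ne_zero_of_mem_gcdGapPairs {p : F[X] × F[X]} (hp : p ∈ gcdGapPairs F k s) :
    p.1 ≠ 0 ∧ p.2 ≠ 0 := by
  obtain ⟨f, g⟩ := p
  obtain ⟨-, -, hgap⟩ := hp
  constructor <;> rintro rfl <;> simp at hgap

theorem natDegree_gcd_le_max (f g : F[X]) :
    (EuclideanDomain.gcd f g).natDegree ≤ max f.natDegree g.natDegree := by
  rcases eq_or_ne f 0 with rfl | hf
  · simp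
  · exact (natDegree_le_of_dvd (EuclideanDomain.gcd_dvd_left f g) hf).trans (le_max_left _ _)

theorem prod_degreeLT_subset_gcdGapPairs_union (hk : 0 < k) :
    (degreeLT F k : Set F[X]) ×ˢ (degreeLT F k : Set F[X]) ⊆
      gcdGapPairs F k s ∪ ⋃ r ∈ Finset.range (s + 1), commonMultiples F (k - r) (r + 1) := by
  rintro ⟨f, g⟩ ⟨hf, hg⟩
  by_cases hgap : (EuclideanDomain.gcd f g).natDegree + s < max f.natDegree g.natDegree
  · exact Or.inl ⟨hf, hg, hgap⟩
  obtain ⟨r, hr⟩ := Nat.exists_eq_add_of_le (natDegree_gcd_le_max f g)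
  exact Or.inr (Set.mem_biUnion (x := r) (Finset.mem_coe.2 (Finset.mem_range.2 (by omega)))
    (mem_commonMultiples_of_dvd hk hf hg (EuclideanDomain.gcd_dvd_left f g)
      (EuclideanDomain.gcd_dvd_right f g) hr))

theorem setOf_gcd_condition_eq_gcdGapPairs (k t c : ℕ) :
    {p : F[X] × F[X] |
      p.1 ≠ 0 ∧ p.2 ≠ 0 ∧ p.1.degree < (k : WithBot ℕ) ∧ p.2.degree < (k : WithBot ℕ) ∧
      (k < t →
        (EuclideanDomain.gcd p.1 p.2).natDegree < max p.1.natDegree p.2.natDegree - c) ∧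
      (t ≤ k →
        (EuclideanDomain.gcd p.1 p.2).natDegree <
          max p.1.natDegree p.2.natDegree - (k - t) - c)} =
      gcdGapPairs F k (k - t + c) := by
  ext p
  constructor
  · rintro ⟨-, -, hf, hg, hlt, hle⟩
    exact ⟨mem_degreeLT.2 hf, mem_degreeLT.2 hg, by omega⟩
  · intro hp
    obtain ⟨hf₀, hg₀⟩ := ne_zero_of_mem_gcdGapPairs hp
    obtain ⟨hf, hg, hgap⟩ := hp
    exact ⟨hf₀, hg₀, mem_degreeLT.1 hf, mem_degreeLT.1 hg, by omega, by omega⟩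

theorem card_pow_le_ncard_gcdGapPairs_add [Finite F] (hs : s < k) :
    Nat.card F ^ (2 * k) ≤ (gcdGapPairs F k s).ncard + Nat.card F ^ (k + s + 3) := by
  have hfin : (gcdGapPairs F k s).Finite :=
    ((finite_degreeLT F k).prod (finite_degreeLT F k)).subset fun _ hp => ⟨hp.1, hp.2.1⟩
  have hfin' : (⋃ r ∈ Finset.range (s + 1), commonMultiples F (k - r) (r + 1)).Finite :=
    (Finset.range (s + 1)).finite_toSet.biUnion fun r _ => finite_commonMultiples F _ _
  calc Nat.card F ^ (2 * k)
      = ((degreeLT F k : Set F[X]) ×ˢ (degreeLT F k : Set F[X])).ncard := by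
        rw [Set.ncard_prod, ncard_degreeLT, ← pow_add, two_mul]
    _ ≤ (gcdGapPairs F k s ∪
          ⋃ r ∈ Finset.range (s + 1), commonMultiples F (k - r) (r + 1)).ncard :=
        Set.ncard_le_ncard (prod_degreeLT_subset_gcdGapPairs_union (by omega)) (hfin.union hfin')
    _ ≤ (gcdGapPairs F k s).ncard +
          ∑ r ∈ Finset.range (s + 1), (commonMultiples F (k - r) (r + 1)).ncard :=
        (Set.ncard_union_le _ _).trans
          (Nat.add_le_add_left (Finset.set_ncard_biUnion_le _ _) _)
    _ ≤ (gcdGapPairs F k s).ncard + Nat.card F ^ (k + s + 3) :=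
        Nat.add_le_add_left (sum_ncard_commonMultiples_le F hs.le) _

end GcdGap

theorem one_sub_one_div_pow_mul_pow_le {K : Type*} [Field K] [LinearOrder K]
    [IsStrictOrderedRing K] {q x : K} {l m n : ℕ} (hq : 1 ≤ q) (hlmn : l + m ≤ n)
    (h : q ^ n ≤ x + q ^ l) : (1 - 1 / q ^ m) * q ^ n ≤ x := by
  have hqm : 0 < q ^ m := by positivity
  have hl : q ^ l ≤ q ^ n / q ^ m := by
    rw [le_div_iff₀ hqm, ← pow_add]
    exact pow_le_pow_right₀ hq hlmn
  calc (1 - 1 / q ^ m) * q ^ n = q ^ n - q ^ n / q ^ m := by ring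
    _ ≤ x := by linarith

theorem stmt17_general {F : Type*} [Field F] [Fintype F] [DecidableEq F] {c m k t : ℕ}
    (hk : c + m + 3 ≤ k) (ht : c + m + 3 ≤ t) :
    (1 - 1 / (Fintype.card F : ℚ) ^ m) * (Fintype.card F : ℚ) ^ (2 * k) ≤
      (Set.ncard {p : Polynomial F × Polynomial F |
        p.1 ≠ 0 ∧ p.2 ≠ 0 ∧ p.1.degree < (k : WithBot ℕ) ∧ p.2.degree < (k : WithBot ℕ) ∧
        (k < t →
          (EuclideanDomain.gcd p.1 p.2).natDegree < max p.1.natDegree p.2.natDegree - c) ∧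
        (t ≤ k →
          (EuclideanDomain.gcd p.1 p.2).natDegree <
            max p.1.natDegree p.2.natDegree - (k - t) - c)} : ℚ) := by
  rw [setOf_gcd_condition_eq_gcdGapPairs]
  have hcount := card_pow_le_ncard_gcdGapPairs_add (F := F) (s := k - t + c) (k := k) (by omega)
  rw [Nat.card_eq_fintype_card] at hcount
  exact one_sub_one_div_pow_mul_pow_le (l := k + (k - t + c) + 3)
    (mod_cast Fintype.card_pos) (by omega) (mod_cast hcount)

/-- For `q ≥ 11` and `k, t ≥ 17`, the set `G` of pairs of nonzero polynomials of
degree `< k` satisfying the gcd condition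
(`deg gcd < max{deg f, deg g} − 5` if `t > k`, and
`deg gcd < max{deg f, deg g} − (k − t) − 5` if `t ≤ k`) satisfies
`|G| ≥ (1 − 1/q⁷) q^{2k}`. -/
theorem stmt17 {F : Type*} [Field F] [Fintype F] [DecidableEq F]
    (hq : 11 ≤ Fintype.card F) {k t : ℕ} (hk : 17 ≤ k) (ht : 17 ≤ t) :
    (1 - 1 / (Fintype.card F : ℚ) ^ 7) * (Fintype.card F : ℚ) ^ (2 * k) ≤
      (Set.ncard {p : Polynomial F × Polynomial F |
        p.1 ≠ 0 ∧ p.2 ≠ 0 ∧ p.1.degree < (k : WithBot ℕ) ∧ p.2.degree < (k : WithBot ℕ) ∧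
        (k < t →
          (EuclideanDomain.gcd p.1 p.2).natDegree < max p.1.natDegree p.2.natDegree - 5) ∧
        (t ≤ k →
          (EuclideanDomain.gcd p.1 p.2).natDegree <
            max p.1.natDegree p.2.natDegree - (k - t) - 5)} : ℚ) :=
  stmt17_general (by omega) (by omega)
end
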